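/- Let H be a real Hilbert space, C a nonempty closed, bounded and convex subset of H, and F : C × C → C a weakly nonexpansive mapping that is demicompact at 0, i.e., for any bounded sequence (xₙ) in C with xₙ − F(xₙ, xₙ) → 0 strongly, there exist a subsequence (xₙⱼ) and x ∈ C such that xₙⱼ → x strongly and x − F(x,x) = 0. Then for every λ ∈ (0,1) and x₀ ∈ C, the sequence defined by xₙ₊₁ = λxₙ + (1−λ)F(xₙ, xₙ) converges strongly to some q ∈ C with F(q,q) = q. -/

import Mathlib

open Filter Topology

/-!
The diagonal map `T x = F x x` is nonexpansive, and the residuals `d n = dist (x n) (T (x n))` of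
its Krasnoselskij iteration decrease to some limit `r`. The Goebel–Kirk inequality
`l ^ n * (1 + n * (1 - l)) * d i ≤ l ^ n * dist (x i) (T (x (i + n))) + (d i - d (i + n))`
becomes, as `i → ∞` along a bounded orbit, `(1 + n * (1 - l)) * r ≤ M` with `M` independent of `n`;
hence `r = 0`. Demicompactness then yields a fixed point `q` that is the limit of a subsequence, and
since `dist (x n) q` decreases, the whole orbit converges to `q`.
-/

theorem lipschitzOnWith_one_diag {E G : Type*} [SeminormedAddCommGroup E]
    [SeminormedAddCommGroup G] {C : Set E} {F : E → E → G} {a b : ℝ} (hab : a + b ≤ 1)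
    (hF : ∀ x ∈ C, ∀ y ∈ C, ∀ u ∈ C, ∀ v ∈ C, ‖F x y - F u v‖ ≤ a * ‖x - u‖ + b * ‖y - v‖) :
    LipschitzOnWith 1 (fun x => F x x) C := by
  refine LipschitzOnWith.of_dist_le_mul fun x hx y hy => ?_
  rw [dist_eq_norm, dist_eq_norm, NNReal.coe_one]
  calc ‖F x x - F y y‖ ≤ a * ‖x - y‖ + b * ‖x - y‖ := hF x hx x hx y hy y hy
    _ = (a + b) * ‖x - y‖ := by ring
    _ ≤ 1 * ‖x - y‖ := by gcongr

theorem pow_mul_one_add_mul_one_sub_le_one {R : Type*} [CommRing R] [LinearOrder R]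
    [IsStrictOrderedRing R] {l : R} (hl0 : 0 ≤ l) (hl1 : l ≤ 1) (n : ℕ) :
    l ^ n * (1 + n * (1 - l)) ≤ 1 := by
  calc l ^ n * (1 + n * (1 - l)) ≤ l ^ n * (1 + (1 - l)) ^ n := by
        gcongr
        exact one_add_mul_le_pow (by linarith) n
    _ = (1 - (1 - l) ^ 2) ^ n := by rw [← mul_pow]; ring
    _ ≤ 1 := pow_le_one₀ (by nlinarith) (by nlinarith)

theorem nonpos_of_forall_nat_one_add_mul_mul_le {K : Type*} [Field K] [LinearOrder K]
    [IsStrictOrderedRing K] [Archimedean K] {c r M : K} (hc : 0 < c)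
    (h : ∀ n : ℕ, (1 + n * c) * r ≤ M) : r ≤ 0 := by
  by_contra! hr
  obtain ⟨n, hn⟩ := exists_nat_gt (M / (c * r))
  rw [div_lt_iff₀ (mul_pos hc hr)] at hn
  linarith [h n]

section Krasnoselskij

open Set Bornology

variable {E : Type*} [SeminormedAddCommGroup E]

/-- Demicompactness at `0` of a map `T` on `C`: every bounded approximate fixed point sequence in
`C` has a subsequence converging to a fixed point in `C`. It is the compactness that turns
asymptotic regularity into convergence. -/
def IsDemicompactAtZeroOn (T : E → E) (C : Set E) : Prop :=
  ∀ x : ℕ → E, (∀ n, x n ∈ C) → IsBounded (range x) →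
    Tendsto (fun n => x n - T (x n)) atTop (𝓝 0) →
    ∃ φ : ℕ → ℕ, StrictMono φ ∧ ∃ q ∈ C, Tendsto (x ∘ φ) atTop (𝓝 q) ∧ q - T q = 0

variable [NormedSpace ℝ E]

/-- Krasnoselskij iteration of `T`: the orbits of the averaged map `l • id + (1 - l) • T`. The
parameter `l` weights the current point, not its image. -/
def IsKrasnoselskijOrbit (l : ℝ) (T : E → E) (x : ℕ → E) : Prop :=
  ∀ n, x (n + 1) = l • x n + (1 - l) • T (x n)

namespace IsKrasnoselskijOrbit

variable {C : Set E} {T : E → E} {l : ℝ} {x : ℕ → E}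

theorem mem (hx : IsKrasnoselskijOrbit l T x) (hl0 : 0 ≤ l) (hl1 : l ≤ 1) (hC : Convex ℝ C)
    (hTC : MapsTo T C C) (hx0 : x 0 ∈ C) (n : ℕ) : x n ∈ C := by
  induction n with
  | zero => exact hx0
  | succ n ih =>
    rw [hx n]
    exact hC ih (hTC ih) hl0 (sub_nonneg.2 hl1) (add_sub_cancel l 1)

theorem dist_succ_self (hx : IsKrasnoselskijOrbit l T x) (hl1 : l ≤ 1) (n : ℕ) :
    dist (x (n + 1)) (x n) = (1 - l) * dist (x n) (T (x n)) := by
  have hstep : x (n + 1) - x n = (1 - l) • (T (x n) - x n) := by rw [hx n]; module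
  rw [dist_eq_norm, hstep, norm_smul_of_nonneg (sub_nonneg.2 hl1), ← dist_eq_norm, dist_comm]

theorem dist_succ_le (hx : IsKrasnoselskijOrbit l T x) (hl0 : 0 ≤ l) (hl1 : l ≤ 1) (n : ℕ)
    (z : E) : dist (x (n + 1)) z ≤ l * dist (x n) z + (1 - l) * dist (T (x n)) z := by
  rw [hx n]
  exact (convexOn_univ_dist z).2 (mem_univ _) (mem_univ _) hl0 (sub_nonneg.2 hl1)
    (add_sub_cancel l 1)

theorem antitone_dist_fixedPoint (hx : IsKrasnoselskijOrbit l T x) (hl0 : 0 ≤ l) (hl1 : l ≤ 1)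
    (hT : LipschitzOnWith 1 T C) (hxC : ∀ n, x n ∈ C) {q : E} (hq : q ∈ C) (hTq : T q = q) :
    Antitone fun n => dist (x n) q := by
  refine antitone_nat_of_succ_le fun n => ?_
  have hTx : dist (T (x n)) q ≤ dist (x n) q := by
    simpa [hTq] using hT.dist_le_mul (x n) (hxC n) q hq
  calc dist (x (n + 1)) q ≤ l * dist (x n) q + (1 - l) * dist (T (x n)) q :=
        hx.dist_succ_le hl0 hl1 n q
    _ ≤ l * dist (x n) q + (1 - l) * dist (x n) q := by gcongr
    _ = dist (x n) q := by ring

theorem antitone_residual (hx : IsKrasnoselskijOrbit l T x) (hl0 : 0 ≤ l) (hl1 : l ≤ 1)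
    (hT : LipschitzOnWith 1 T C) (hxC : ∀ n, x n ∈ C) :
    Antitone fun n => dist (x n) (T (x n)) := by
  refine antitone_nat_of_succ_le fun n => ?_
  have hTx : dist (T (x n)) (T (x (n + 1))) ≤ (1 - l) * dist (x n) (T (x n)) := by
    rw [← hx.dist_succ_self hl1, dist_comm]
    simpa using hT.dist_le_mul (x (n + 1)) (hxC _) (x n) (hxC n)
  have hxT : dist (x (n + 1)) (T (x n)) ≤ l * dist (x n) (T (x n)) := by
    simpa using hx.dist_succ_le hl0 hl1 n (T (x n))
  linarith [dist_triangle (x (n + 1)) (T (x n)) (T (x (n + 1)))]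

theorem dist_add_self_le (hx : IsKrasnoselskijOrbit l T x) (hl1 : l ≤ 1)
    (hres : Antitone fun n => dist (x n) (T (x n))) (i n : ℕ) :
    dist (x (i + n)) (x i) ≤ n * ((1 - l) * dist (x i) (T (x i))) := by
  induction n with
  | zero => simp
  | succ n ih =>
    have hstep : dist (x (i + n + 1)) (x (i + n)) ≤ (1 - l) * dist (x i) (T (x i)) := by
      rw [hx.dist_succ_self hl1]
      exact mul_le_mul_of_nonneg_left (hres (i.le_add_right n)) (sub_nonneg.2 hl1)
    rw [← add_assoc, Nat.cast_succ]
    linarith [dist_triangle (x (i + n + 1)) (x (i + n)) (x i)]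

theorem dist_succ_image_le (hx : IsKrasnoselskijOrbit l T x) (hl0 : 0 ≤ l) (hl1 : l ≤ 1)
    (hT : LipschitzOnWith 1 T C) (hxC : ∀ n, x n ∈ C) (i n : ℕ) :
    dist (x (i + 1)) (T (x (i + n))) ≤
      l * dist (x i) (T (x (i + n))) + n * (1 - l) ^ 2 * dist (x i) (T (x i)) := by
  have hTx : dist (T (x i)) (T (x (i + n))) ≤ n * ((1 - l) * dist (x i) (T (x i))) := by
    rw [dist_comm]
    calc dist (T (x (i + n))) (T (x i)) ≤ dist (x (i + n)) (x i) := by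
          simpa using hT.dist_le_mul (x (i + n)) (hxC _) (x i) (hxC i)
      _ ≤ _ := hx.dist_add_self_le hl1 (hx.antitone_residual hl0 hl1 hT hxC) i n
  calc dist (x (i + 1)) (T (x (i + n)))
      ≤ l * dist (x i) (T (x (i + n))) + (1 - l) * dist (T (x i)) (T (x (i + n))) :=
        hx.dist_succ_le hl0 hl1 i _
    _ ≤ l * dist (x i) (T (x (i + n))) + (1 - l) * (n * ((1 - l) * dist (x i) (T (x i)))) := by
        gcongr
    _ = _ := by ring

/-- The Goebel–Kirk inequality, multiplied through by `l ^ n` to avoid division. -/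
theorem goebel_kirk (hx : IsKrasnoselskijOrbit l T x) (hl0 : 0 ≤ l) (hl1 : l ≤ 1)
    (hT : LipschitzOnWith 1 T C) (hxC : ∀ n, x n ∈ C) (n i : ℕ) :
    l ^ n * (1 + n * (1 - l)) * dist (x i) (T (x i)) ≤
      l ^ n * dist (x i) (T (x (i + n))) +
        (dist (x i) (T (x i)) - dist (x (i + n)) (T (x (i + n)))) := by
  induction n generalizing i with
  | zero => simp
  | succ n ih =>
    have hshift := ih (i + 1)
    rw [add_right_comm, add_assoc i n 1] at hshift
    have himage := mul_le_mul_of_nonneg_left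
      (hx.dist_succ_image_le hl0 hl1 hT hxC i (n + 1)) (pow_nonneg hl0 n)
    have hdrop : dist (x (i + 1)) (T (x (i + 1))) ≤ dist (x i) (T (x i)) :=
      hx.antitone_residual hl0 hl1 hT hxC i.le_succ
    have hbernoulli := mul_le_mul_of_nonneg_right
      (pow_mul_one_add_mul_one_sub_le_one hl0 hl1 n) (sub_nonneg.2 hdrop)
    push_cast at himage ⊢
    rw [pow_succ]
    linear_combination hshift + himage + hbernoulli

theorem exists_dist_image_le (hx : IsKrasnoselskijOrbit l T x) (hl0 : 0 ≤ l) (hl1 : l ≤ 1)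
    (hT : LipschitzOnWith 1 T C) (hxC : ∀ n, x n ∈ C) (hbdd : IsBounded (range x)) :
    ∃ M, ∀ i j, dist (x i) (T (x j)) ≤ M := by
  obtain ⟨R, hR⟩ := Metric.isBounded_range_iff.1 hbdd
  refine ⟨R + dist (x 0) (T (x 0)), fun i j => ?_⟩
  exact (dist_triangle _ (x j) _).trans
    (add_le_add (hR i j) (hx.antitone_residual hl0 hl1 hT hxC j.zero_le))

theorem tendsto_residual_zero (hx : IsKrasnoselskijOrbit l T x) (hl0 : 0 < l) (hl1 : l < 1)
    (hT : LipschitzOnWith 1 T C) (hxC : ∀ n, x n ∈ C) (hbdd : IsBounded (range x)) :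
    Tendsto (fun n => dist (x n) (T (x n))) atTop (𝓝 0) := by
  obtain ⟨M, hM⟩ := hx.exists_dist_image_le hl0.le hl1.le hT hxC hbdd
  obtain ⟨r, hr⟩ : ∃ r, Tendsto (fun n => dist (x n) (T (x n))) atTop (𝓝 r) :=
    ⟨_, tendsto_atTop_ciInf (hx.antitone_residual hl0.le hl1.le hT hxC)
      ⟨0, by rintro _ ⟨n, rfl⟩; exact dist_nonneg⟩⟩
  have hlinear (n : ℕ) : (1 + n * (1 - l)) * r ≤ M := by
    have hlim : l ^ n * (1 + n * (1 - l)) * r ≤ l ^ n * M + (r - r) :=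
      le_of_tendsto_of_tendsto' (hr.const_mul _)
        ((hr.sub (hr.comp (tendsto_add_atTop_nat n))).const_add _) fun i =>
          (hx.goebel_kirk hl0.le hl1.le hT hxC n i).trans (by gcongr; exacts [hM _ _, le_rfl])
    rw [sub_self, add_zero, mul_assoc] at hlim
    exact le_of_mul_le_mul_left hlim (pow_pos hl0 n)
  have hr_nonpos := nonpos_of_forall_nat_one_add_mul_mul_le (sub_pos.2 hl1) hlinear
  rwa [hr_nonpos.antisymm (ge_of_tendsto' hr fun _ => dist_nonneg)] at hr

theorem tendsto_of_tendsto_subseq (hx : IsKrasnoselskijOrbit l T x) (hl0 : 0 ≤ l) (hl1 : l ≤ 1)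
    (hT : LipschitzOnWith 1 T C) (hxC : ∀ n, x n ∈ C) {q : E} (hq : q ∈ C) (hTq : T q = q)
    {φ : ℕ → ℕ} (hφ : Tendsto φ atTop atTop) (hφq : Tendsto (x ∘ φ) atTop (𝓝 q)) :
    Tendsto x atTop (𝓝 q) := by
  rw [tendsto_iff_dist_tendsto_zero] at hφq ⊢
  exact (tendsto_iff_tendsto_subseq_of_antitone
    (hx.antitone_dist_fixedPoint hl0 hl1 hT hxC hq hTq) hφ).2 hφq

end IsKrasnoselskijOrbit

theorem krasnoselskij_strong_convergence_demicompact_at_zero_general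
    {C : Set E} (hC : Convex ℝ C) {T : E → E} (hTC : MapsTo T C C) (hT : LipschitzOnWith 1 T C)
    (hdemi : IsDemicompactAtZeroOn T C) {l : ℝ} (hl0 : 0 < l) (hl1 : l < 1) {x : ℕ → E}
    (hx0 : x 0 ∈ C) (hx : IsKrasnoselskijOrbit l T x) (hbdd : IsBounded (range x)) :
    ∃ q ∈ C, T q = q ∧ Tendsto x atTop (𝓝 q) := by
  have hxC : ∀ n, x n ∈ C := hx.mem hl0.le hl1.le hC hTC hx0
  have hresidual : Tendsto (fun n => x n - T (x n)) atTop (𝓝 0) := by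
    rw [tendsto_zero_iff_norm_tendsto_zero]
    simpa only [dist_eq_norm] using hx.tendsto_residual_zero hl0 hl1 hT hxC hbdd
  obtain ⟨φ, hφ, q, hq, hφq, hfix⟩ := hdemi x hxC hbdd hresidual
  have hTq : T q = q := (sub_eq_zero.1 hfix).symm
  exact ⟨q, hq, hTq,
    hx.tendsto_of_tendsto_subseq hl0.le hl1.le hT hxC hq hTq hφ.tendsto_atTop hφq⟩

end Krasnoselskij

/-- If `F : C × C → C` is weakly nonexpansive on a nonempty bounded
closed convex subset `C` of a real Hilbert space and is demicompact at `0` (any bounded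
sequence `(xₙ)` in `C` with `xₙ − F(xₙ,xₙ) → 0` has a subsequence converging strongly to
some `x ∈ C` with `x − F(x,x) = 0`), then for every `λ ∈ (0,1)` and `x₀ ∈ C`, the
Krasnoselskij iteration `xₙ₊₁ = λxₙ + (1−λ)F(xₙ,xₙ)` converges strongly to some `q ∈ C`
with `F(q,q) = q`. -/
theorem krasnoselskij_strong_convergence_demicompact_at_zero
    {H : Type*} [NormedAddCommGroup H] [InnerProductSpace ℝ H] [CompleteSpace H]
    (C : Set H) (hne : C.Nonempty) (hbdd : Bornology.IsBounded C)
    (hcl : IsClosed C) (hconv : Convex ℝ C)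
    (F : H → H → H) (hmaps : ∀ x ∈ C, ∀ y ∈ C, F x y ∈ C)
    (a b : ℝ) (ha : 0 ≤ a) (hb : 0 ≤ b) (hab : a + b ≤ 1)
    (hF : ∀ x ∈ C, ∀ y ∈ C, ∀ u ∈ C, ∀ v ∈ C,
      ‖F x y - F u v‖ ≤ a * ‖x - u‖ + b * ‖y - v‖)
    (hdemi0 : ∀ x : ℕ → H, (∀ n, x n ∈ C) →
      Bornology.IsBounded (Set.range x) →
      Tendsto (fun n => x n - F (x n) (x n)) atTop (𝓝 0) →
      ∃ φ : ℕ → ℕ, StrictMono φ ∧ ∃ q ∈ C,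
        Tendsto (x ∘ φ) atTop (𝓝 q) ∧ q - F q q = 0) :
    ∀ l : ℝ, 0 < l → l < 1 → ∀ x : ℕ → H, x 0 ∈ C →
      (∀ n, x (n + 1) = l • x n + (1 - l) • F (x n) (x n)) →
      ∃ q ∈ C, F q q = q ∧ Tendsto x atTop (𝓝 q) := by
  intro l hl0 hl1 x hx0 hx
  have hTC : Set.MapsTo (fun x => F x x) C C := fun x hx => hmaps x hx x hx
  have horbit : IsKrasnoselskijOrbit l (fun x => F x x) x := hx
  have hxC := horbit.mem hl0.le hl1.le hconv hTC hx0
  exact krasnoselskij_strong_convergence_demicompact_at_zero_general hconv hTC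
    (lipschitzOnWith_one_diag hab hF) hdemi0 hl0 hl1 hx0 horbit
    (hbdd.subset (Set.range_subset_iff.2 hxC))
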